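/- Let (Ω, 𝒜, μ) be a probability space, let K, k, L be positive integers with L > K·(k - 1), and let A_0, …, A_{L-1} be measurable sets with μ(A_i) ≥ 1/K for every i < L. Then there exist indices i_1 < i_2 < … < i_k < L such that μ(A_{i_1} ∩ A_{i_2} ∩ … ∩ A_{i_k}) > 0. -/

import Mathlib

/-!
Suppose every intersection of `k` of the sets is null. As there are only finitely many `k`-subsets
of the index set, almost every point lies in at most `k - 1` of the sets, so the counting function
`x ↦ ∑ i < L, 1_{A i} x` is a.e. at most `k - 1`. Its integral is `∑ i < L, μ (A i) ≥ L / K`,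
whence `L ≤ K * (k - 1)`, contrary to the hypothesis.
-/

open MeasureTheory

theorem exists_k_intersection_of_measure_ge
    {Ω : Type*} [MeasurableSpace Ω] (μ : Measure Ω) [IsProbabilityMeasure μ]
    (K k L : ℕ) (hK : 0 < K) (hk : 0 < k) (hL : K * (k - 1) < L)
    (A : ℕ → Set Ω) (hmeas : ∀ i < L, MeasurableSet (A i))
    (hμ : ∀ i < L, (1 : ENNReal) / K ≤ μ (A i)) :
    ∃ s : Finset ℕ, s.card = k ∧ (∀ i ∈ s, i < L) ∧ 0 < μ (⋂ i ∈ s, A i) := by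
  classical
  by_contra! hcon
  have hae : ∀ᵐ x ∂μ, ∀ s ∈ (Finset.range L).powersetCard k, x ∉ ⋂ i ∈ s, A i := by
    rw [Finset.eventually_all]
    intro s hs
    rw [Finset.mem_powersetCard] at hs
    exact measure_eq_zero_iff_ae_notMem.1
      (nonpos_iff_eq_zero.1 (hcon s hs.2 fun i hi => Finset.mem_range.1 (hs.1 hi)))
  have hcount : ∀ᵐ x ∂μ,
      ∑ i ∈ Finset.range L, (A i).indicator (1 : Ω → ENNReal) x ≤ ((k - 1 : ℕ) : ENNReal) := by
    filter_upwards [hae] with x hx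
    have hcard : ((Finset.range L).filter fun i => x ∈ A i).card ≤ k - 1 := by
      by_contra! h
      obtain ⟨s, hs, hsk⟩ := Finset.exists_subset_card_eq 
        (show k ≤ ((Finset.range L).filter fun i => x ∈ A i).card by omega)
      refine hx s (Finset.mem_powersetCard.2 ⟨hs.trans (Finset.filter_subset _ _), hsk⟩) ?_
      simp only [Set.mem_iInter]
      exact fun i hi => (Finset.mem_filter.1 (hs hi)).2
    simp only [Set.indicator_apply, Pi.one_apply, Finset.sum_boole]
    exact_mod_cast hcard
  have hsum : ∑ i ∈ Finset.range L, μ (A i) ≤ ((k - 1 : ℕ) : ENNReal) := by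
    calc ∑ i ∈ Finset.range L, μ (A i)
        = ∑ i ∈ Finset.range L, ∫⁻ x, (A i).indicator (1 : Ω → ENNReal) x ∂μ :=
          Finset.sum_congr rfl fun i hi =>
            (lintegral_indicator_one (hmeas i (Finset.mem_range.1 hi))).symm
      _ = ∫⁻ x, ∑ i ∈ Finset.range L, (A i).indicator (1 : Ω → ENNReal) x ∂μ :=
          (lintegral_finsetSum _ fun i hi =>
            measurable_one.indicator (hmeas i (Finset.mem_range.1 hi))).symm
      _ ≤ ∫⁻ _, ((k - 1 : ℕ) : ENNReal) ∂μ := lintegral_mono_ae hcount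
      _ = ((k - 1 : ℕ) : ENNReal) := by simp
  have hlow : (L : ENNReal) / K ≤ ((k - 1 : ℕ) : ENNReal) := by
    calc (L : ENNReal) / K = ∑ _i ∈ Finset.range L, (1 : ENNReal) / K := by
          simp [div_eq_mul_inv]
      _ ≤ ∑ i ∈ Finset.range L, μ (A i) :=
          Finset.sum_le_sum fun i hi => hμ i (Finset.mem_range.1 hi)
      _ ≤ _ := hsum
  rw [ENNReal.div_le_iff (by exact_mod_cast hK.ne') (ENNReal.natCast_ne_top K)] at hlow
  have hle : L ≤ (k - 1) * K := by exact_mod_cast hlow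
  rw [mul_comm] at hle
  omega
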